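/- Let ℓ ≥ 2, let A be an essential hyperplane arrangement in K^ℓ, let H ∈ A, and suppose A' = A \ {H} is also essential. Then r(A') ≤ r(A) ≤ r(A') + 1. -/

import Mathlib

open Classical MvPolynomial

variable {K : Type*} [Field K] [CharZero K] {ℓ : ℕ}

/-- A (central) hyperplane arrangement: a finite set of nonzero linear forms,
pairwise non-proportional. -/
def IsArrangement (A : Finset (MvPolynomial (Fin ℓ) K)) : Prop :=
  (∀ α ∈ A, α ≠ 0 ∧ α.IsHomogeneous 1) ∧
    ∀ α ∈ A, ∀ β ∈ A, α ≠ β → ∀ c : K, α ≠ c • β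

/-- The arrangement is essential: the common zero set of its forms is `{0}`. -/
def IsEssential (A : Finset (MvPolynomial (Fin ℓ) K)) : Prop :=
  ∀ v : Fin ℓ → K, (∀ α ∈ A, eval v α = 0) → v = 0

/-- The defining polynomial `Q(A)`. -/
noncomputable def Qpoly (A : Finset (MvPolynomial (Fin ℓ) K)) : MvPolynomial (Fin ℓ) K :=
  ∏ α ∈ A, α

/-- Apply a derivation `θ = Σ θ_j ∂_j` to a polynomial. -/
noncomputable def applyDer (θ : Fin ℓ → MvPolynomial (Fin ℓ) K)
    (f : MvPolynomial (Fin ℓ) K) : MvPolynomial (Fin ℓ) K :=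
  ∑ j, θ j * pderiv j f

/-- The minimal degree of a Jacobian relation `r(A)`. -/
noncomputable def mdr (A : Finset (MvPolynomial (Fin ℓ) K)) : ℕ :=
  sInf {r | ∃ θ : Fin ℓ → MvPolynomial (Fin ℓ) K, θ ≠ 0 ∧
    (∀ j, (θ j).IsHomogeneous r) ∧ applyDer θ (Qpoly A) = 0}

/-- The number of elements `|A^H|` of the restriction of `A` to `H`:
the number of distinct subspaces `H ∩ ker α_L`, `L ∈ A \ {H}`. -/
noncomputable def restCard (A : Finset (MvPolynomial (Fin ℓ) K))
    (H : MvPolynomial (Fin ℓ) K) : ℕ :=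
  ((A.erase H).image fun L => {v : Fin ℓ → K | eval v H = 0 ∧ eval v L = 0}).card

/-!
Write `Q = αQ'` with `α` the form of `H`, so that `α` and `Q'` are relatively prime. A derivation
killing `Q` maps `Q'` into `(Q')`, because `α D(Q') = -D(α) Q'`; a derivation `D` killing `Q'`
gives `αD`, which maps `Q` into `(Q)`. In both cases a logarithmic derivation, `D(g) = f g` for a
form `g` of degree `n`, is turned into one killing `g` by the Euler correction `n D - f θ_E`. The
result is nonzero: `D` kills a form of positive degree, which no nonzero multiple of `θ_E` does.
If `Q'` is constant, then `Q` is linear and is killed by a constant derivation.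
-/

section Homogeneous

variable {σ R : Type*}

lemma homogeneousComponent_add_mul [CommSemiring R] {g : MvPolynomial σ R} {n : ℕ}
    (hg : g.IsHomogeneous n) (f : MvPolynomial σ R) (k : ℕ) :
    homogeneousComponent (k + n) (f * g) = homogeneousComponent k f * g := by
  let _ : GradedAlgebra (homogeneousSubmodule σ R) := MvPolynomial.gradedAlgebra
  have h := DirectSum.coe_decompose_mul_add_of_right_mem (homogeneousSubmodule σ R)
    (i := k) (a := f) hg
  exact (decomposition.decompose'_apply (f * g) (k + n)).symm.trans
    (h.trans (congrArg (· * g) (decomposition.decompose'_apply f k)))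

lemma isHomogeneous_left_of_mul [CommSemiring R] [NoZeroDivisors R]
    {f g : MvPolynomial σ R} {m n : ℕ} (hfg : (f * g).IsHomogeneous (m + n))
    (hg : g.IsHomogeneous n) (hg0 : g ≠ 0) : f.IsHomogeneous m := by
  have hcomp (k : ℕ) (hk : k ≠ m) : homogeneousComponent k f = 0 := by
    have h := homogeneousComponent_add_mul hg f k
    rw [homogeneousComponent_of_mem hfg, if_neg (by omega)] at h
    exact (mul_eq_zero.1 h.symm).resolve_right hg0
  rw [← sum_homogeneousComponent f]
  refine IsHomogeneous.sum _ _ _ fun k _ => ?_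
  rcases eq_or_ne k m with rfl | hk
  · exact homogeneousComponent_isHomogeneous k f
  · exact hcomp k hk ▸ isHomogeneous_zero _ _ _

end Homogeneous

section Irreducible

variable {σ : Type*}

lemma irreducible_of_isHomogeneous_one {k : Type*} [Field k] {p : MvPolynomial σ k}
    (hp : p.IsHomogeneous 1) (hp0 : p ≠ 0) : Irreducible p := by
  refine irreducible_of_totalDegree_eq_one (hp.totalDegree hp0) fun x hx => ?_
  rw [isUnit_iff_ne_zero]
  rintro rfl
  exact hp0 (MvPolynomial.ext _ _ fun i => by simpa using hx i)

lemma isRelPrime_of_forall_ne_smul {R : Type*} [CommRing R] [IsReduced R]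
    {p q : MvPolynomial σ R} (hp : Irreducible p) (hq : Irreducible q) (hpq : ∀ c : R, q ≠ c • p) :
    IsRelPrime p q := by
  refine hp.isRelPrime_iff_not_dvd.2 fun hdvd => ?_
  obtain ⟨u, hu⟩ := hp.associated_of_dvd hq hdvd
  obtain ⟨c, -, hc⟩ := isUnit_iff_eq_C_of_isReduced.1 u.isUnit
  exact hpq c (by rw [← hu, hc, smul_eq_C_mul, mul_comm])

end Irreducible

section HomogeneousDerivations

variable {σ R : Type*} [CommRing R]
  {D E : Derivation R (MvPolynomial σ R) (MvPolynomial σ R)} {f g q : MvPolynomial σ R}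
  {m n r : ℕ}

/-- A derivation is homogeneous of degree `r` if it maps linear forms, equivalently the variables,
to forms of degree `r`; as a graded endomorphism its degree is then `r - 1`. -/
def IsHomogeneousDerivation (D : Derivation R (MvPolynomial σ R) (MvPolynomial σ R)) (r : ℕ) :
    Prop :=
  ∀ i, (D (X i)).IsHomogeneous r

lemma isHomogeneousDerivation_pderiv (i : σ) :
    IsHomogeneousDerivation (pderiv i : Derivation R (MvPolynomial σ R) _) 0 := by
  intro j
  rcases eq_or_ne j i with rfl | hij
  · simpa using isHomogeneous_one σ R
  · simpa [pderiv_X_of_ne hij] using isHomogeneous_zero σ R 0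

namespace IsHomogeneousDerivation

lemma sub (hD : IsHomogeneousDerivation D r) (hE : IsHomogeneousDerivation E r) :
    IsHomogeneousDerivation (D - E) r :=
  fun i => (hD i).sub (hE i)

lemma smul (hf : f.IsHomogeneous m) (hD : IsHomogeneousDerivation D r) :
    IsHomogeneousDerivation (f • D) (m + r) :=
  fun i => hf.mul (hD i)

lemma const_smul (hD : IsHomogeneousDerivation D r) (c : R) :
    IsHomogeneousDerivation (c • D) r :=
  fun i => (homogeneousSubmodule σ R r).smul_mem _ (hD i)

end IsHomogeneousDerivation

/-- The Euler derivation `θ_E = ∑ xᵢ ∂ᵢ`, which multiplies every form by its degree. -/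
noncomputable def eulerDerivation (σ R : Type*) [CommRing R] :
    Derivation R (MvPolynomial σ R) (MvPolynomial σ R) :=
  mkDerivation R X

/-- The degrees `r` in which `g` has a nonzero Jacobian relation, that is, in which some nonzero
homogeneous derivation kills `g`. For `g = Q(A)` the least of them is `r(A)`. -/
def jacobianDegrees (g : MvPolynomial σ R) : Set ℕ :=
  {r | ∃ D : Derivation R (MvPolynomial σ R) (MvPolynomial σ R),
    D ≠ 0 ∧ IsHomogeneousDerivation D r ∧ D g = 0}

lemma mem_jacobianDegrees_of_isHomogeneous_succ [Nontrivial R] [Nontrivial σ]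
    (hg : g.IsHomogeneous (n + 1)) : n ∈ jacobianDegrees g := by
  obtain ⟨i, j, hij⟩ := exists_pair_ne σ
  by_cases hi : pderiv i g = 0
  · refine ⟨(X i ^ n : MvPolynomial σ R) • pderiv i, fun h => ?_,
      .smul (isHomogeneous_X_pow i n) (isHomogeneousDerivation_pderiv i), by simp [hi]⟩
    simpa [X_pow_eq_monomial] using DFunLike.congr_fun h (X i)
  · -- the Koszul relation between two partial derivatives
    refine ⟨pderiv j g • pderiv i - pderiv i g • pderiv j, fun h => hi ?_,
      .sub (.smul hg.pderiv (isHomogeneousDerivation_pderiv i))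
        (.smul hg.pderiv (isHomogeneousDerivation_pderiv j)), by simp [mul_comm]⟩
    simpa [pderiv_X_of_ne hij.symm, pderiv_X_of_ne hij] using DFunLike.congr_fun h (X j)

lemma derivation_apply_eq_sum_pderiv [Fintype σ]
    (D : Derivation R (MvPolynomial σ R) (MvPolynomial σ R)) (f : MvPolynomial σ R) :
    D f = ∑ i, D (X i) * pderiv i f := by
  have h (p) : (∑ i, D (X i) • pderiv i) p = ∑ i, D (X i) * pderiv i p := by
    rw [← Derivation.coeFnAddMonoidHom_apply, map_sum, Finset.sum_apply]
    rfl
  have hD : D = ∑ i, D (X i) • pderiv i := derivation_ext fun j => by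
    simp [h, pderiv_X, Pi.single_apply]
  exact (DFunLike.congr_fun hD f).trans (h f)

variable [Finite σ]

lemma eulerDerivation_apply (hg : g.IsHomogeneous n) :
    eulerDerivation σ R g = (n : R) • g := by
  cases nonempty_fintype σ
  rw [derivation_apply_eq_sum_pderiv, Nat.cast_smul_eq_nsmul, ← hg.sum_X_mul_pderiv]
  simp only [eulerDerivation, mkDerivation_X]

lemma IsHomogeneousDerivation.apply (hD : IsHomogeneousDerivation D r)
    (hg : g.IsHomogeneous (n + 1)) : (D g).IsHomogeneous (r + n) := by
  cases nonempty_fintype σ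
  rw [derivation_apply_eq_sum_pderiv]
  exact IsHomogeneous.sum _ _ _ fun i _ => (hD i).mul hg.pderiv

variable [IsDomain R]

lemma IsHomogeneousDerivation.smul_eulerDerivation (hD : IsHomogeneousDerivation D r)
    (hg : g.IsHomogeneous (n + 1)) (hg0 : g ≠ 0) (hf : D g = g * f) :
    IsHomogeneousDerivation (f • eulerDerivation σ R) r := by
  intro i
  refine isHomogeneous_left_of_mul (n := n + 1) ?_ hg hg0
  have h : (f • eulerDerivation σ R) (X i) * g = D g * X i := by
    simp only [Derivation.smul_apply, eulerDerivation, mkDerivation_X, smul_eq_mul, hf]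
    ring
  exact h ▸ (hD.apply hg).mul (isHomogeneous_X R i)

variable [CharZero R]

lemma natCast_smul_ne_smul_eulerDerivation (hD0 : D ≠ 0) (hDq : D q = 0) (hq0 : q ≠ 0)
    (hq : q.IsHomogeneous m) (hm : m ≠ 0) (hn : n ≠ 0) (f : MvPolynomial σ R) :
    (n : R) • D ≠ f • eulerDerivation σ R := by
  intro h
  have hf : f = 0 := by
    have hfq : f * ((m : R) • q) = 0 := by
      simpa [hDq, eulerDerivation_apply hq] using (DFunLike.congr_fun h q).symm
    exact (mul_eq_zero.1 hfq).resolve_right (smul_ne_zero (Nat.cast_ne_zero.2 hm) hq0)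
  refine hD0 (derivation_ext fun i => ?_)
  have hDi : (n : R) • D (X i) = 0 := by simpa [hf] using DFunLike.congr_fun h (X i)
  exact (smul_eq_zero.1 hDi).resolve_left (Nat.cast_ne_zero.2 hn)

lemma mem_jacobianDegrees_of_dvd_apply (hD : IsHomogeneousDerivation D r) (hD0 : D ≠ 0)
    (hg : g.IsHomogeneous n) (hn : n ≠ 0) (hg0 : g ≠ 0) (hDg : g ∣ D g)
    (hq : q.IsHomogeneous m) (hm : m ≠ 0) (hq0 : q ≠ 0) (hDq : D q = 0) :
    r ∈ jacobianDegrees g := by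
  obtain ⟨k, rfl⟩ := Nat.exists_eq_succ_of_ne_zero hn
  obtain ⟨f, hf⟩ := hDg
  refine ⟨((k + 1 : ℕ) : R) • D - f • eulerDerivation σ R,
    sub_ne_zero.2 (natCast_smul_ne_smul_eulerDerivation hD0 hDq hq0 hq hm hn f),
    (hD.const_smul _).sub (hD.smul_eulerDerivation hg hg0 hf), ?_⟩
  rw [Derivation.sub_apply, Derivation.smul_apply, Derivation.smul_apply, hf,
    eulerDerivation_apply hg, smul_eq_mul, mul_smul_comm, mul_comm, sub_self]

lemma jacobianDegrees_mul_subset [UniqueFactorizationMonoid R] (hf : f.IsHomogeneous m)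
    (hg : g.IsHomogeneous n) (hfg0 : f * g ≠ 0) (hfg : IsRelPrime f g) :
    jacobianDegrees (f * g) ⊆ jacobianDegrees g := by
  rintro r ⟨D, hD0, hD, hDfg⟩
  rcases eq_or_ne n 0 with rfl | hn
  · refine ⟨D, hD0, hD, ?_⟩
    rw [totalDegree_eq_zero_iff_eq_C.1 (Nat.le_zero.1 hg.totalDegree_le), derivation_C]
  · have hdvd : g ∣ D g := by
      refine hfg.symm.dvd_of_dvd_mul_left ⟨-D f, ?_⟩
      rw [D.leibniz, smul_eq_mul, smul_eq_mul] at hDfg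
      linear_combination hDfg
    exact mem_jacobianDegrees_of_dvd_apply hD hD0 hg hn (right_ne_zero_of_mul hfg0) hdvd
      (hf.mul hg) (by omega) hfg0 hDfg

lemma add_mem_jacobianDegrees_mul (hf : f.IsHomogeneous m) (hf0 : f ≠ 0)
    (hg : g.IsHomogeneous n) (hn : n ≠ 0) (hg0 : g ≠ 0) (hr : r ∈ jacobianDegrees g) :
    m + r ∈ jacobianDegrees (f * g) := by
  obtain ⟨D, hD0, hD, hDg⟩ := hr
  have hfD0 : f • D ≠ 0 := fun h => hD0 <| derivation_ext fun i =>
    (mul_eq_zero.1 (DFunLike.congr_fun h (X i))).resolve_left hf0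
  have hdvd : f * g ∣ (f • D) (f * g) := ⟨D f, by
    rw [Derivation.smul_apply, D.leibniz, hDg, smul_zero, zero_add, smul_smul, smul_eq_mul]⟩
  exact mem_jacobianDegrees_of_dvd_apply (.smul hf hD) hfD0 (hf.mul hg) (by omega)
    (mul_ne_zero hf0 hg0) hdvd hg hn hg0 (by rw [Derivation.smul_apply, hDg, smul_zero])

end HomogeneousDerivations

section Arrangements

variable {k : Type*} [Field k] {d : ℕ} {A : Finset (MvPolynomial (Fin d) k)}
  {H : MvPolynomial (Fin d) k}

lemma applyDer_eq_mkDerivation (θ : Fin d → MvPolynomial (Fin d) k)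
    (f : MvPolynomial (Fin d) k) : applyDer θ f = mkDerivation k θ f := by
  simp only [applyDer, derivation_apply_eq_sum_pderiv (mkDerivation k θ) f, mkDerivation_X]

lemma mdr_eq_sInf_jacobianDegrees (A : Finset (MvPolynomial (Fin d) k)) :
    mdr A = sInf (jacobianDegrees (Qpoly A)) := by
  refine congrArg sInf (Set.ext fun r => (mkDerivationEquiv k).toEquiv.exists_congr fun θ => ?_)
  have hθ : (mkDerivationEquiv k).toEquiv θ = mkDerivation k θ := rfl
  have hθ0 : mkDerivation k θ ≠ 0 ↔ θ ≠ 0 := (mkDerivationEquiv k).map_ne_zero_iff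
  simp only [hθ, hθ0, applyDer_eq_mkDerivation, IsHomogeneousDerivation, mkDerivation_X]

lemma Qpoly_eq_mul_erase (hH : H ∈ A) : Qpoly A = H * Qpoly (A.erase H) :=
  (Finset.mul_prod_erase A id hH).symm

namespace IsArrangement

lemma erase (hA : IsArrangement A) (H : MvPolynomial (Fin d) k) : IsArrangement (A.erase H) :=
  ⟨fun α hα => hA.1 α (Finset.mem_of_mem_erase hα), fun α hα β hβ =>
    hA.2 α (Finset.mem_of_mem_erase hα) β (Finset.mem_of_mem_erase hβ)⟩

lemma isHomogeneous_Qpoly (hA : IsArrangement A) : (Qpoly A).IsHomogeneous A.card := by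
  simpa [Qpoly] using IsHomogeneous.prod A id (fun _ => 1) fun α hα => (hA.1 α hα).2

lemma Qpoly_ne_zero (hA : IsArrangement A) : Qpoly A ≠ 0 :=
  Finset.prod_ne_zero_iff.2 fun α hα => (hA.1 α hα).1

lemma isRelPrime_Qpoly_erase (hA : IsArrangement A) (hH : H ∈ A) :
    IsRelPrime H (Qpoly (A.erase H)) := by
  have hirr {α} (hα : α ∈ A) : Irreducible α :=
    irreducible_of_isHomogeneous_one (hA.1 α hα).2 (hA.1 α hα).1
  refine IsRelPrime.prod_right fun α hα => ?_
  have hαA := Finset.mem_of_mem_erase hα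
  exact isRelPrime_of_forall_ne_smul (hirr hH) (hirr hαA)
    (hA.2 α hαA H hH (Finset.ne_of_mem_erase hα))

lemma card_erase_mem_jacobianDegrees (hA : IsArrangement A) (hd : 2 ≤ d) (hH : H ∈ A) :
    (A.erase H).card ∈ jacobianDegrees (Qpoly A) := by
  have : Nontrivial (Fin d) := Fin.nontrivial_iff_two_le.2 hd
  refine mem_jacobianDegrees_of_isHomogeneous_succ ?_
  rw [Finset.card_erase_add_one hH]
  exact hA.isHomogeneous_Qpoly

variable [CharZero k]

lemma jacobianDegrees_subset_erase (hA : IsArrangement A) (hH : H ∈ A) :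
    jacobianDegrees (Qpoly A) ⊆ jacobianDegrees (Qpoly (A.erase H)) := by
  have hQ := Qpoly_eq_mul_erase hH
  exact hQ ▸ jacobianDegrees_mul_subset (hA.1 H hH).2 (hA.erase H).isHomogeneous_Qpoly
    (hQ ▸ hA.Qpoly_ne_zero) (hA.isRelPrime_Qpoly_erase hH)

lemma add_one_mem_jacobianDegrees (hA : IsArrangement A) (hH : H ∈ A)
    (hne : (A.erase H).Nonempty) {r : ℕ} (hr : r ∈ jacobianDegrees (Qpoly (A.erase H))) :
    r + 1 ∈ jacobianDegrees (Qpoly A) := by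
  rw [add_comm, Qpoly_eq_mul_erase hH]
  exact add_mem_jacobianDegrees_mul (hA.1 H hH).2 (hA.1 H hH).1
    (hA.erase H).isHomogeneous_Qpoly hne.card_ne_zero (hA.erase H).Qpoly_ne_zero hr

end IsArrangement

end Arrangements

theorem mdr_deletion_bounds_general (hl : 2 ≤ ℓ) (A : Finset (MvPolynomial (Fin ℓ) K))
    (hA : IsArrangement A) (H : MvPolynomial (Fin ℓ) K) (hH : H ∈ A) :
    mdr (A.erase H) ≤ mdr A ∧ mdr A ≤ mdr (A.erase H) + 1 := by
  have hcard := hA.card_erase_mem_jacobianDegrees hl hH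
  have hsub := hA.jacobianDegrees_subset_erase hH
  simp only [mdr_eq_sInf_jacobianDegrees]
  refine ⟨csInf_le_csInf (OrderBot.bddBelow _) ⟨_, hcard⟩ hsub, ?_⟩
  rcases (A.erase H).eq_empty_or_nonempty with hempty | hne
  · rw [hempty, Finset.card_empty] at hcard
    exact (Nat.sInf_le hcard).trans (Nat.zero_le _)
  · exact Nat.sInf_le (hA.add_one_mem_jacobianDegrees hH hne (Nat.sInf_mem ⟨_, hsub hcard⟩))

/-- Let `ℓ ≥ 2`, let `A` be an essential hyperplane arrangement in `K^ℓ`,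
let `H ∈ A`, and suppose `A' = A \ {H}` is also essential.
Then `r(A') ≤ r(A) ≤ r(A') + 1`. -/
theorem mdr_deletion_bounds (hl : 2 ≤ ℓ) (A : Finset (MvPolynomial (Fin ℓ) K))
    (hA : IsArrangement A) (hAess : IsEssential A)
    (H : MvPolynomial (Fin ℓ) K) (hH : H ∈ A)
    (hA'ess : IsEssential (A.erase H)) :
    mdr (A.erase H) ≤ mdr A ∧ mdr A ≤ mdr (A.erase H) + 1 :=
  mdr_deletion_bounds_general hl A hA H hH
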